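/- arXiv:2112.04026 — 4 statements merged into one kernel-verified Lean document; each statement's English description precedes it below -/
import Mathlib

section
/- Let α ∈ ℝ with α > 0 and α ≠ 1, and let μ, ν ∈ [0,∞) with μ ≠ ν. Then (2^α·(μ^α + ν^α) − 2·(μ + ν)^α)/(2^α − 2) > 0; moreover the expression equals 0 when μ = ν. -/
/-- Scaling the midpoint back up: `(x + y)^p = 2^p ((x + y)/2)^p`. -/
theorem add_rpow_eq_two_rpow_mul_midpoint {x y : ℝ} (hx : 0 ≤ x) (hy : 0 ≤ y) (p : ℝ) :
    (x + y) ^ p = (2 : ℝ) ^ p * ((1 / 2 : ℝ) • x + (1 / 2 : ℝ) • y) ^ p := by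
  rw [← Real.mul_rpow (by norm_num) (by positivity)]
  congr 1
  simp only [smul_eq_mul]
  ring

theorem two_mul_add_rpow_lt {x y p : ℝ} (hx : 0 ≤ x) (hy : 0 ≤ y) (hxy : x ≠ y) (hp : 1 < p) :
    2 * (x + y) ^ p < (2 : ℝ) ^ p * (x ^ p + y ^ p) := by
  have hmid := (strictConvexOn_rpow hp).2 hx hy hxy
    (one_half_pos (α := ℝ)) one_half_pos (add_halves 1)
  have h2 : (0 : ℝ) < 2 ^ p := by positivity
  rw [add_rpow_eq_two_rpow_mul_midpoint hx hy]
  simp only [smul_eq_mul] at hmid ⊢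
  linarith [mul_lt_mul_of_pos_left hmid h2]

theorem lt_two_mul_add_rpow {x y p : ℝ} (hx : 0 ≤ x) (hy : 0 ≤ y) (hxy : x ≠ y)
    (hp0 : 0 < p) (hp1 : p < 1) :
    (2 : ℝ) ^ p * (x ^ p + y ^ p) < 2 * (x + y) ^ p := by
  have hmid := (Real.strictConcaveOn_rpow hp0 hp1).2 hx hy hxy
    (one_half_pos (α := ℝ)) one_half_pos (add_halves 1)
  have h2 : (0 : ℝ) < 2 ^ p := by positivity
  rw [add_rpow_eq_two_rpow_mul_midpoint hx hy]
  simp only [smul_eq_mul] at hmid ⊢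
  linarith [mul_lt_mul_of_pos_left hmid h2]

/-- Strict positivity of the associated semi-metric for `α`-stable models:
for `α > 0`, `α ≠ 1` and `μ ≠ ν` nonnegative,
`(2^α (μ^α + ν^α) − 2 (μ+ν)^α)/(2^α − 2) > 0`, and the expression is `0` for `μ = ν`. -/
theorem stmt_3 (α : ℝ) (hα : 0 < α) (hα1 : α ≠ 1) (μ ν : ℝ) (hμ : 0 ≤ μ) (hν : 0 ≤ ν) :
    (μ ≠ ν →
      0 < ((2 : ℝ) ^ α * (μ ^ α + ν ^ α) - 2 * (μ + ν) ^ α) / ((2 : ℝ) ^ α - 2)) ∧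
    (μ = ν →
      ((2 : ℝ) ^ α * (μ ^ α + ν ^ α) - 2 * (μ + ν) ^ α) / ((2 : ℝ) ^ α - 2) = 0) := by
  refine ⟨fun hne => ?_, ?_⟩
  · rcases hα1.lt_or_gt with hlt | hgt
    · have hden : (2 : ℝ) ^ α < 2 := Real.rpow_lt_self_of_one_lt one_lt_two hlt
      exact div_pos_of_neg_of_neg (sub_neg.2 (lt_two_mul_add_rpow hμ hν hne hα hlt))
        (sub_neg.2 hden)
    · have hden : (2 : ℝ) < 2 ^ α := Real.self_lt_rpow_of_one_lt one_lt_two hgt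
      exact div_pos (sub_pos.2 (two_mul_add_rpow_lt hμ hν hne hgt)) (sub_pos.2 hden)
  · rintro rfl
    rw [← two_mul μ, Real.mul_rpow zero_le_two hμ]
    ring
end

section
/- Let (Ω, 𝒜, ℙ) be a probability space, Ω' a metric space equipped with its Borel σ-algebra, X : Ω → Ω' measurable, and Θ a compact metric space. Let r : Θ × Ω' → Ω' be such that for each θ ∈ Θ the map x ↦ r(θ, x) is measurable, and for each x ∈ Ω' the map θ ↦ r(θ, x) is continuous. Let L : Ω' × Ω' → [0, ∞) be measurable and, for each fixed first argument, continuous in its second argument. Assume there is a constant M < ∞ such that L(X(ω), r(θ, X(ω))) ≤ M for ℙ-almost every ω and all θ ∈ Θ. Then the map θ ↦ E[L(X, r(θ, X))] is continuous on Θ, and there exists θ* ∈ Θ attaining its minimum; i.e., the autoencoder regression problem min_{θ∈Θ} E[L(X, r_θ(X))] has a solution. -/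
open MeasureTheory

/-- Existence of a solution to the autoencoder regression problem: with a compact
parameter space `Θ`, reconstruction functions `r θ` measurable in the data and
continuous in `θ`, a nonnegative loss `L` continuous in its second argument and
essentially bounded uniformly in `θ`, the risk `θ ↦ E[L(X, r θ (X))]` is continuous
and attains its minimum. -/
theorem stmt_6 {Ω : Type*} [MeasurableSpace Ω] (ℙ : Measure Ω) [IsProbabilityMeasure ℙ]
    {Ω' : Type*} [MetricSpace Ω'] [MeasurableSpace Ω'] [BorelSpace Ω']
    {Θ : Type*} [MetricSpace Θ] [CompactSpace Θ] [Nonempty Θ]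
    (X : Ω → Ω') (hX : Measurable X)
    (r : Θ → Ω' → Ω')
    (hrmeas : ∀ θ : Θ, Measurable (r θ))
    (hrcont : ∀ x : Ω', Continuous fun θ : Θ => r θ x)
    (L : Ω' → Ω' → ℝ)
    (hLmeas : Measurable (Function.uncurry L))
    (hLnonneg : ∀ a b : Ω', 0 ≤ L a b)
    (hLcont : ∀ a : Ω', Continuous (L a))
    (M : ℝ)
    (hbound : ∀ᵐ ω ∂ℙ, ∀ θ : Θ, L (X ω) (r θ (X ω)) ≤ M) :
    Continuous (fun θ : Θ => ∫ ω, L (X ω) (r θ (X ω)) ∂ℙ) ∧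
    ∃ θstar : Θ, ∀ θ : Θ,
      ∫ ω, L (X ω) (r θstar (X ω)) ∂ℙ ≤ ∫ ω, L (X ω) (r θ (X ω)) ∂ℙ := by
  have hcont : Continuous (fun θ : Θ => ∫ ω, L (X ω) (r θ (X ω)) ∂ℙ) := by
    refine continuous_of_dominated (bound := fun _ => M) (fun θ => ?_) (fun θ => ?_)
      (integrable_const M) (.of_forall fun ω => (hLcont (X ω)).comp (hrcont (X ω)))
    · exact (hLmeas.comp (hX.prodMk ((hrmeas θ).comp hX))).aestronglyMeasurable
    · filter_upwards [hbound] with ω hω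
      rw [Real.norm_of_nonneg (hLnonneg _ _)]
      exact hω θ
  obtain ⟨θstar, -, hmin⟩ :=
    isCompact_univ.exists_isMinOn Set.univ_nonempty hcont.continuousOn
  exact ⟨hcont, θstar, fun θ => hmin (Set.mem_univ θ)⟩
end

section
/- Let d, p ∈ ℕ and q ≥ 1. For a matrix b ∈ [0,∞)^{d×p} and u ∈ [0,∞)^d define f_b(u) := inf_{c ∈ [0,∞)^p} Σ_{i=1}^d |u_i − max_{1≤k≤p} c_k·b_{ik}|. Then: (i) for every b and u the infimum is attained by some c ∈ [0,∞)^p, and 0 ≤ f_b(u) ≤ Σ_{i=1}^d u_i; (ii) the map (b, u) ↦ f_b(u) is continuous on the set {b ∈ [0,∞)^{d×p} : ‖b_{·k}‖_q = 1 for every column k} × [0,∞)^d. -/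
open scoped NNReal

section MaxTimes

variable {ι κ : Type*} [Fintype ι]

/-- The `ℓ¹`-distance from `u` to the max-times combination of the columns of `b` with
coefficients `c`. -/
noncomputable def maxTimesCost (b : ι → κ → ℝ) (u : ι → ℝ) (c : κ → ℝ≥0) : ℝ :=
  ∑ i, |u i - ⨆ k, (c k : ℝ) * b i k|

theorem maxTimesCost_nonneg (b : ι → κ → ℝ) (u : ι → ℝ) (c : κ → ℝ≥0) :
    0 ≤ maxTimesCost b u c :=
  Finset.sum_nonneg fun _ _ => abs_nonneg _

theorem bddBelow_range_maxTimesCost (b : ι → κ → ℝ) (u : ι → ℝ) :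
    BddBelow (Set.range (maxTimesCost b u)) :=
  ⟨0, by rintro _ ⟨c, rfl⟩; exact maxTimesCost_nonneg b u c⟩

theorem maxTimesCost_zero (b : ι → κ → ℝ) {u : ι → ℝ} (hu : ∀ i, 0 ≤ u i) :
    maxTimesCost b u 0 = ∑ i, u i := by
  simp [maxTimesCost, abs_of_nonneg (hu _)]

variable [Fintype κ]

theorem continuous_maxTimesCost [Nonempty κ] :
    Continuous fun x : ((ι → κ → ℝ) × (ι → ℝ)) × (κ → ℝ≥0) =>
      maxTimesCost x.1.1 x.1.2 x.2 := by
  have hsup : ∀ i, Continuous fun x : ((ι → κ → ℝ) × (ι → ℝ)) × (κ → ℝ≥0) =>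
      ⨆ k, (x.2 k : ℝ) * x.1.1 i k := by
    intro i
    simp_rw [← Finset.sup'_univ_eq_ciSup]
    exact Continuous.finset_sup'_apply _ fun k _ => by fun_prop
  unfold maxTimesCost
  fun_prop

/-- A coefficient vector that overshoots `2 * ∑ i, u i` in some entry costs at least as much as
the zero vector. -/
theorem sum_le_maxTimesCost {b : ι → κ → ℝ} {u : ι → ℝ} (hu : ∀ i, 0 ≤ u i)
    {c : κ → ℝ≥0} {i : ι} {k : κ} (h : 2 * ∑ i, u i ≤ c k * b i k) :
    ∑ i, u i ≤ maxTimesCost b u c := by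
  have h₁ : (c k : ℝ) * b i k ≤ ⨆ k, (c k : ℝ) * b i k :=
    le_ciSup (f := fun k => (c k : ℝ) * b i k) (Set.finite_range _).bddAbove k
  have h₂ : |u i - ⨆ k, (c k : ℝ) * b i k| ≤ maxTimesCost b u c :=
    Finset.single_le_sum (f := fun i => |u i - ⨆ k, (c k : ℝ) * b i k|)
      (fun _ _ => abs_nonneg _) (Finset.mem_univ i)
  have h₃ : u i ≤ ∑ i, u i := Finset.single_le_sum (fun i _ => hu i) (Finset.mem_univ i)
  have h₄ := neg_le_abs (u i - ⨆ k, (c k : ℝ) * b i k)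
  linarith

theorem exists_mem_Icc_maxTimesCost_le {b : ι → κ → ℝ} {u : ι → ℝ} {M : κ → ℝ≥0}
    (hb : ∀ i k, 0 ≤ b i k) (hu : ∀ i, 0 ≤ u i)
    (hM : ∀ k, (∀ i, b i k = 0) ∨ ∃ i, 2 * ∑ i, u i ≤ M k * b i k) (c : κ → ℝ≥0) :
    ∃ c' ∈ Set.Icc 0 M, maxTimesCost b u c' ≤ maxTimesCost b u c := by
  by_cases h : ∃ i k, 2 * ∑ i, u i ≤ c k * b i k
  · obtain ⟨i, k, hik⟩ := h
    exact ⟨0, ⟨le_rfl, zero_le⟩, (maxTimesCost_zero b hu).trans_le (sum_le_maxTimesCost hu hik)⟩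
  · push Not at h
    refine ⟨c ⊓ M, ⟨zero_le, inf_le_right⟩, le_of_eq ?_⟩
    have key : ∀ i k, (((c ⊓ M) k : ℝ≥0) : ℝ) * b i k = c k * b i k := by
      intro i k
      rcases hM k with h0 | ⟨j, hj⟩
      · simp [h0 i]
      · have hlt : (c k : ℝ) < M k := lt_of_mul_lt_mul_right ((h j k).trans_le hj) (hb j k)
        rw [Pi.inf_apply, inf_eq_left.2 (NNReal.coe_lt_coe.1 hlt).le]
    simp only [maxTimesCost, key]

theorem iInf_maxTimesCost_eq_sInf_image {b : ι → κ → ℝ} {u : ι → ℝ} {M : κ → ℝ≥0}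
    (hb : ∀ i k, 0 ≤ b i k) (hu : ∀ i, 0 ≤ u i)
    (hM : ∀ k, (∀ i, b i k = 0) ∨ ∃ i, 2 * ∑ i, u i ≤ M k * b i k) :
    ⨅ c, maxTimesCost b u c = sInf (maxTimesCost b u '' Set.Icc 0 M) := by
  apply le_antisymm
  · refine le_csInf ((Set.nonempty_Icc.2 zero_le).image _) ?_
    rintro _ ⟨c, -, rfl⟩
    exact ciInf_le (bddBelow_range_maxTimesCost b u) c
  · refine le_ciInf fun c => ?_
    obtain ⟨c', hc', hle⟩ := exists_mem_Icc_maxTimesCost_le hb hu hM c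
    exact (csInf_le ((bddBelow_range_maxTimesCost b u).mono (Set.image_subset_range _ _))
      (Set.mem_image_of_mem _ hc')).trans hle

theorem exists_lt_nnreal_mul (a : ℝ) {x : ℝ} (hx : 0 < x) : ∃ m : ℝ≥0, a < m * x := by
  obtain ⟨n, hn⟩ := exists_nat_gt (a / x)
  exact ⟨n, by simpa using (div_lt_iff₀ hx).1 hn⟩

theorem exists_iInf_maxTimesCost_eq [Nonempty κ] {b : ι → κ → ℝ} {u : ι → ℝ}
    (hb : ∀ i k, 0 ≤ b i k) (hu : ∀ i, 0 ≤ u i) :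
    ∃ c, ⨅ c, maxTimesCost b u c = maxTimesCost b u c := by
  have hM : ∀ k, ∃ m : ℝ≥0, (∀ i, b i k = 0) ∨ ∃ i, 2 * ∑ i, u i ≤ m * b i k := by
    intro k
    by_cases h : ∀ i, b i k = 0
    · exact ⟨0, Or.inl h⟩
    · push Not at h
      obtain ⟨i, hi⟩ := h
      obtain ⟨m, hm⟩ := exists_lt_nnreal_mul (2 * ∑ i, u i) ((hb i k).lt_of_ne' hi)
      exact ⟨m, Or.inr ⟨i, hm.le⟩⟩
  choose M hM using hM
  have hcont : Continuous (maxTimesCost b u) :=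
    continuous_maxTimesCost.comp (Continuous.prodMk_right (b, u))
  obtain ⟨c, -, hc⟩ := (isCompact_Icc (a := (0 : κ → ℝ≥0)) (b := M)).exists_sInf_image_eq
    (Set.nonempty_Icc.2 zero_le) hcont.continuousOn
  exact ⟨c, (iInf_maxTimesCost_eq_sInf_image hb hu hM).trans hc⟩

theorem continuousOn_iInf_maxTimesCost [Nonempty κ] :
    ContinuousOn (fun bu : (ι → κ → ℝ) × (ι → ℝ) => ⨅ c, maxTimesCost bu.1 bu.2 c)
      {bu | (∀ i k, 0 ≤ bu.1 i k) ∧ (∀ i, 0 ≤ bu.2 i) ∧ ∀ k, ∃ i, bu.1 i k ≠ 0} := by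
  rintro ⟨b, u⟩ ⟨hb, hu, hne⟩
  choose j hj using hne
  choose M hM using fun k =>
    exists_lt_nnreal_mul (2 * ∑ i, u i) ((hb (j k) k).lt_of_ne' (hj k))
  have hnhds : ∀ᶠ bu : (ι → κ → ℝ) × (ι → ℝ) in nhds (b, u),
      ∀ k, 2 * ∑ i, bu.2 i < M k * bu.1 (j k) k :=
    Filter.eventually_all.2 fun k =>
      ContinuousAt.eventually_lt (by fun_prop) (by fun_prop) (hM k)
  have hcont : Continuous fun bu : (ι → κ → ℝ) × (ι → ℝ) =>
      sInf (maxTimesCost bu.1 bu.2 '' Set.Icc 0 M) :=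
    isCompact_Icc.continuous_sInf (f := fun bu : (ι → κ → ℝ) × (ι → ℝ) =>
      maxTimesCost bu.1 bu.2) continuous_maxTimesCost
  refine hcont.continuousWithinAt.congr_of_eventuallyEq ?_
    (iInf_maxTimesCost_eq_sInf_image hb hu fun k => Or.inr ⟨j k, (hM k).le⟩)
  filter_upwards [self_mem_nhdsWithin, nhdsWithin_le_nhds hnhds] with bu hbu hlt
  exact iInf_maxTimesCost_eq_sInf_image hbu.1 hbu.2.1 fun k => Or.inr ⟨j k, (hlt k).le⟩

end MaxTimes

/-- Properties of the ℓ¹-distance `f_b(u)` from `u` to the max-times span of the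
columns of `b`: the defining infimum over `c ∈ [0,∞)^p` is attained,
`0 ≤ f_b(u) ≤ Σ_i u_i`, and `(b,u) ↦ f_b(u)` is continuous on the set of
nonnegative `(b,u)` with `q`-normalized columns. -/
theorem stmt_15 (d p : ℕ) (hd : 0 < d) (hp : 0 < p) (q : ℝ) (hq : 1 ≤ q)
    (f : (Fin d → Fin p → ℝ) → (Fin d → ℝ) → ℝ)
    (hf : ∀ b u, f b u = ⨅ c : Fin p → ℝ≥0, ∑ i, |u i - ⨆ k, (c k : ℝ) * b i k|) :
    (∀ b u, (∀ i k, 0 ≤ b i k) → (∀ i, 0 ≤ u i) →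
      (∃ c : Fin p → ℝ≥0, f b u = ∑ i, |u i - ⨆ k, (c k : ℝ) * b i k|) ∧
      0 ≤ f b u ∧ f b u ≤ ∑ i, u i) ∧
    ContinuousOn (fun bu : (Fin d → Fin p → ℝ) × (Fin d → ℝ) => f bu.1 bu.2)
      {bu | (∀ i k, 0 ≤ bu.1 i k) ∧ (∀ i, 0 ≤ bu.2 i) ∧
        ∀ k, (∑ i, bu.1 i k ^ q) ^ (1 / q) = 1} := by
  have : Nonempty (Fin p) := ⟨⟨0, hp⟩⟩
  have hf' : ∀ b u, f b u = ⨅ c, maxTimesCost b u c := hf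
  refine ⟨fun b u hb hu => ⟨?_, ?_, ?_⟩, ?_⟩
  · rw [hf']
    exact exists_iInf_maxTimesCost_eq hb hu
  · rw [hf']
    exact Real.iInf_nonneg (maxTimesCost_nonneg b u)
  · rw [hf', ← maxTimesCost_zero b hu]
    exact ciInf_le (bddBelow_range_maxTimesCost b u) 0
  · simp_rw [hf']
    refine continuousOn_iInf_maxTimesCost.mono ?_
    rintro ⟨b, u⟩ ⟨hb, hu, hnorm⟩
    refine ⟨hb, hu, fun k => ?_⟩
    by_contra! h0 : ∀ i, b i k = 0
    have hq0 : q ≠ 0 := by positivity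
    simpa [h0, Real.zero_rpow hq0, Real.zero_rpow (inv_ne_zero hq0)] using hnorm k
end

section
/- Let d, p ∈ ℕ, q ≥ 1, Ξ := {u ∈ [0,∞)^d : ‖u‖_q = 1}, and let S be a finite Borel measure on Ξ. For b ∈ Ξ^p (a d×p matrix whose columns lie in Ξ) and u ∈ [0,∞)^d, let f_b(u) := inf_{c ∈ [0,∞)^p} Σ_{i=1}^d |u_i − max_{1≤k≤p} c_k·b_{ik}|. Then the map b ↦ ∫_Ξ f_b(u) S(du) is continuous on the compact set Ξ^p, satisfies 0 ≤ ∫_Ξ f_b(u) S(du) ≤ ∫_Ξ ‖u‖₁ S(du) < ∞ for every b, and attains its minimum on Ξ^p; i.e., the exhaustive, unrestricted PCA_p problem for a 1-Fréchet max-stable distribution with spectral measure S has a solution. -/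
open MeasureTheory
open scoped NNReal

/-- The nonnegative part of the unit `ℓ^q` sphere in `ℝ^d`. -/
def posSphere (d : ℕ) (q : ℝ) : Set (Fin d → ℝ) :=
  {u | (∀ i, 0 ≤ u i) ∧ (∑ i, u i ^ q) ^ (1 / q) = 1}

/-- The `ℓ¹`-distance from `u` to the max-times combination of the columns of `b` with
coefficients `c`. -/
noncomputable def maxTimesError {d p : ℕ} (b : Fin p → Fin d → ℝ) (u : Fin d → ℝ)
    (c : Fin p → ℝ≥0) : ℝ :=
  ∑ i, |u i - ⨆ k, (c k : ℝ) * b k i|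

section posSphere

variable {d : ℕ} {q : ℝ} {u : Fin d → ℝ}

lemma sum_rpow_eq_one_of_mem_posSphere (hq : 1 ≤ q) (hu : u ∈ posSphere d q) :
    ∑ i, u i ^ q = 1 := by
  have h0 : 0 ≤ ∑ i, u i ^ q := Finset.sum_nonneg fun i _ => Real.rpow_nonneg (hu.1 i) q
  have hq0 : q ≠ 0 := by linarith
  have h := hu.2
  rwa [one_div, Real.rpow_inv_eq h0 zero_le_one hq0, Real.one_rpow] at h

lemma le_one_of_mem_posSphere (hq : 1 ≤ q) (hu : u ∈ posSphere d q) (i : Fin d) :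
    u i ≤ 1 := by
  have h : u i ^ q ≤ 1 := by
    rw [← sum_rpow_eq_one_of_mem_posSphere hq hu]
    exact Finset.single_le_sum (f := fun j => u j ^ q)
      (fun j _ => Real.rpow_nonneg (hu.1 j) q) (Finset.mem_univ i)
  by_contra! hlt
  exact absurd (Real.one_lt_rpow hlt (by linarith)) h.not_gt

lemma exists_one_le_mul_of_mem_posSphere (hq : 1 ≤ q) (hu : u ∈ posSphere d q) :
    ∃ i, 1 ≤ d * u i := by
  by_contra! h
  have hsum := sum_rpow_eq_one_of_mem_posSphere hq hu
  have hle : ∑ i, u i ^ q ≤ ∑ i, u i := Finset.sum_le_sum fun i _ => by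
    simpa using Real.rpow_le_rpow_of_exponent_ge_of_imp (hu.1 i)
      (le_one_of_mem_posSphere hq hu i) hq
      (fun _ h1 => absurd h1 (by linarith))
  have hne : (Finset.univ : Finset (Fin d)).Nonempty := by
    rw [Finset.nonempty_iff_ne_empty]
    intro h0
    simp [h0] at hsum
  have hlt : ∑ i, (d : ℝ) * u i < ∑ _i : Fin d, (1 : ℝ) :=
    Finset.sum_lt_sum_of_nonempty hne fun i _ => h i
  rw [← Finset.mul_sum] at hlt
  simp only [Finset.sum_const, Finset.card_univ, Fintype.card_fin, nsmul_eq_mul, mul_one] at hlt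
  have hd : (0 : ℝ) ≤ d := d.cast_nonneg
  nlinarith

lemma isCompact_posSphere (hq : 1 ≤ q) : IsCompact (posSphere d q) := by
  refine (isCompact_Icc (a := (0 : Fin d → ℝ)) (b := 1)).of_isClosed_subset ?_
    fun u hu => ⟨hu.1, le_one_of_mem_posSphere hq hu⟩
  have hq0 : 0 ≤ q := by linarith
  have hcont : Continuous fun u : Fin d → ℝ => (∑ i, u i ^ q) ^ (1 / q) :=
    (continuous_finsetSum _ fun i _ =>
      (continuous_apply i).rpow_const fun _ => Or.inr hq0).rpow_const
        fun _ => Or.inr (by positivity)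
  have hnonneg : IsClosed {u : Fin d → ℝ | ∀ i, 0 ≤ u i} := by
    simp only [Set.ofPred_forall]
    exact isClosed_iInter fun i => isClosed_le continuous_const (continuous_apply i)
  exact hnonneg.inter (isClosed_eq hcont continuous_const)

lemma posSphere_nonempty (hd : 0 < d) (hq : 1 ≤ q) : (posSphere d q).Nonempty := by
  refine ⟨Pi.single ⟨0, hd⟩ 1, fun i => ?_, ?_⟩
  · exact (Pi.single_nonneg.2 zero_le_one : (0 : Fin d → ℝ) ≤ _) i
  · rw [Finset.sum_eq_single ⟨0, hd⟩] <;> simp +contextual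
    intro _ _
    exact Real.zero_rpow (by linarith)

end posSphere

section maxTimesError

variable {d p : ℕ} {b : Fin p → Fin d → ℝ} {u : Fin d → ℝ}

lemma maxTimesError_nonneg (c : Fin p → ℝ≥0) : 0 ≤ maxTimesError b u c :=
  Finset.sum_nonneg fun _ _ => abs_nonneg _

lemma bddBelow_range_maxTimesError : BddBelow (Set.range (maxTimesError b u)) :=
  ⟨0, by rintro _ ⟨c, rfl⟩; exact maxTimesError_nonneg c⟩

lemma maxTimesError_zero (hu : ∀ i, 0 ≤ u i) : maxTimesError b u 0 = ∑ i, u i := by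
  simp [maxTimesError, abs_of_nonneg (hu _)]

lemma iInf_maxTimesError_le_sum (hu : ∀ i, 0 ≤ u i) : ⨅ c, maxTimesError b u c ≤ ∑ i, u i :=
  maxTimesError_zero (b := b) hu ▸ ciInf_le bddBelow_range_maxTimesError 0

lemma continuous_maxTimesError (hp : 0 < p) :
    Continuous fun x : ((Fin p → Fin d → ℝ) × (Fin d → ℝ)) × (Fin p → ℝ≥0) =>
      maxTimesError x.1.1 x.1.2 x.2 := by
  have : Nonempty (Fin p) := ⟨⟨0, hp⟩⟩
  simp only [maxTimesError, ← Finset.sup'_univ_eq_ciSup]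
  refine continuous_finsetSum _ fun i _ => (Continuous.sub (by fun_prop) ?_).abs
  exact Continuous.finset_sup'_apply Finset.univ_nonempty fun k _ => by fun_prop

/-- Coefficients outside the box `[0, d * (d + 1)]^p` do no better than zero coefficients. -/
lemma maxTimesError_zero_le {q : ℝ} (hq : 1 ≤ q) (hb : ∀ k, b k ∈ posSphere d q)
    (hu : u ∈ posSphere d q) {c : Fin p → ℝ≥0} {k : Fin p} (hc : (d * (d + 1) : ℝ≥0) < c k) :
    maxTimesError b u 0 ≤ maxTimesError b u c := by
  obtain ⟨i, hi⟩ := exists_one_le_mul_of_mem_posSphere hq (hb k)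
  have hu1 := le_one_of_mem_posSphere hq hu
  have hsum : ∑ j, u j ≤ d := by
    simpa using Finset.sum_le_sum fun (j : Fin d) (_ : j ∈ Finset.univ) => hu1 j
  have hc' : (d * (d + 1) : ℝ) < c k := by exact_mod_cast hc
  have hsup : (c k : ℝ) * b k i ≤ ⨆ l, (c l : ℝ) * b l i :=
    le_ciSup (f := fun l => (c l : ℝ) * b l i) (Set.finite_range _).bddAbove k
  have hlarge : (d + 1 : ℝ) ≤ c k * b k i := by
    have := mul_le_mul_of_nonneg_right hc'.le ((hb k).1 i)
    have hd : (0 : ℝ) ≤ d := d.cast_nonneg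
    nlinarith
  calc maxTimesError b u 0 = ∑ j, u j := maxTimesError_zero hu.1
    _ ≤ d := hsum
    _ ≤ |u i - ⨆ l, (c l : ℝ) * b l i| := by
      rw [abs_sub_comm]
      exact le_trans (by linarith [hu1 i]) (le_abs_self _)
    _ ≤ maxTimesError b u c :=
      Finset.single_le_sum (f := fun i => |u i - ⨆ l, (c l : ℝ) * b l i|)
        (fun _ _ => abs_nonneg _) (Finset.mem_univ i)

lemma iInf_maxTimesError_eq_sInf_image {q : ℝ} (hq : 1 ≤ q) (hb : ∀ k, b k ∈ posSphere d q)
    (hu : u ∈ posSphere d q) :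
    ⨅ c, maxTimesError b u c =
      sInf (maxTimesError b u '' Set.Icc 0 fun _ => (d * (d + 1) : ℝ≥0)) := by
  have hbdd := bddBelow_range_maxTimesError (b := b) (u := u)
  have hmem : (0 : Fin p → ℝ≥0) ∈ Set.Icc 0 fun _ : Fin p => (d * (d + 1) : ℝ≥0) :=
    ⟨le_rfl, fun _ => zero_le⟩
  have hbdd' := hbdd.mono (Set.image_subset_range (maxTimesError b u)
    (Set.Icc 0 fun _ => (d * (d + 1) : ℝ≥0)))
  apply le_antisymm
  · exact csInf_le_csInf hbdd ⟨_, Set.mem_image_of_mem _ hmem⟩ (Set.image_subset_range _ _)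
  · refine le_ciInf fun c => ?_
    by_cases hc : ∀ k, c k ≤ d * (d + 1)
    · exact csInf_le hbdd' (Set.mem_image_of_mem _ ⟨fun _ => zero_le, hc⟩)
    · push Not at hc
      obtain ⟨k, hk⟩ := hc
      exact (csInf_le hbdd' (Set.mem_image_of_mem _ hmem)).trans
        (maxTimesError_zero_le hq hb hu hk)

end maxTimesError

/-- Existence of a solution to the exhaustive, unrestricted `PCA_p` problem for a
1-Fréchet max-stable distribution with finite spectral measure `S` on the sphere
`Ξ = {u ∈ [0,∞)^d : ‖u‖_q = 1}`: the objective `b ↦ ∫_Ξ f_b(u) S(du)` is continuous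
on the (compact) set of matrices with columns in `Ξ`, bounded between `0` and
`∫_Ξ ‖u‖₁ S(du)`, and attains its minimum there. -/
theorem stmt_16 (d p : ℕ) (hd : 0 < d) (hp : 0 < p) (q : ℝ) (hq : 1 ≤ q)
    (Ξ : Set (Fin d → ℝ))
    (hΞ : Ξ = {u | (∀ i, 0 ≤ u i) ∧ (∑ i, u i ^ q) ^ (1 / q) = 1})
    (S : Measure (Fin d → ℝ)) [IsFiniteMeasure S]
    (f : (Fin p → Fin d → ℝ) → (Fin d → ℝ) → ℝ)
    (hf : ∀ b u, f b u = ⨅ c : Fin p → ℝ≥0, ∑ i, |u i - ⨆ k, (c k : ℝ) * b k i|)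
    (B : Set (Fin p → Fin d → ℝ)) (hB : B = {b | ∀ k, b k ∈ Ξ}) :
    ContinuousOn (fun b => ∫ u in Ξ, f b u ∂S) B ∧
    (∀ b ∈ B, 0 ≤ ∫ u in Ξ, f b u ∂S ∧ ∫ u in Ξ, f b u ∂S ≤ ∫ u in Ξ, ∑ i, u i ∂S) ∧
    ∃ bstar ∈ B, ∀ b ∈ B, ∫ u in Ξ, f bstar u ∂S ≤ ∫ u in Ξ, f b u ∂S := by
  have hf' : ∀ b u, f b u = ⨅ c, maxTimesError b u c := hf
  obtain rfl : Ξ = posSphere d q := hΞ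
  subst hB
  have hcomp : IsCompact (posSphere d q) := isCompact_posSphere hq
  let g : (Fin p → Fin d → ℝ) → (Fin d → ℝ) → ℝ := fun b u =>
    sInf (maxTimesError b u '' Set.Icc 0 fun _ => (d * (d + 1) : ℝ≥0))
  have hg : Continuous g.uncurry :=
    isCompact_Icc.continuous_sInf
      (f := fun (x : (Fin p → Fin d → ℝ) × (Fin d → ℝ)) c => maxTimesError x.1 x.2 c)
      (continuous_maxTimesError hp)
  have hfg : ∀ b ∈ {b : Fin p → Fin d → ℝ | ∀ k, b k ∈ posSphere d q},
      Set.EqOn (f b) (g b) (posSphere d q) := fun b hb u hu =>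
    (hf' b u).trans (iInf_maxTimesError_eq_sInf_image hq hb hu)
  have hcont : ContinuousOn (fun b => ∫ u in posSphere d q, f b u ∂S)
      {b | ∀ k, b k ∈ posSphere d q} :=
    (continuous_parametric_integral_of_continuous hg hcomp).continuousOn.congr fun b hb =>
      setIntegral_congr_fun hcomp.measurableSet (hfg b hb)
  refine ⟨hcont, fun b hb => ⟨?_, ?_⟩, ?_⟩
  · refine integral_nonneg fun u => ?_
    rw [Pi.zero_apply, hf']
    exact Real.iInf_nonneg maxTimesError_nonneg
  · refine setIntegral_mono_on ?_ ?_ hcomp.measurableSet fun u hu => ?_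
    · exact ((hg.uncurry_left b).continuousOn.congr (hfg b hb)).integrableOn_compact hcomp
    · exact ContinuousOn.integrableOn_compact hcomp (by fun_prop)
    · rw [hf']
      exact iInf_maxTimesError_le_sum hu.1
  · have hBcomp : IsCompact {b : Fin p → Fin d → ℝ | ∀ k, b k ∈ posSphere d q} :=
      isCompact_pi_infinite fun _ => hcomp
    obtain ⟨u, hu⟩ := posSphere_nonempty hd hq
    exact hBcomp.exists_isMinOn ⟨fun _ => u, fun _ => hu⟩ hcont
end
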